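/- Let 𝓑 be an admissible W-orbit of sets of mutually orthogonal positive roots, B ∈ 𝓑, and let i ≠ j be nodes with i ≁ j. If r_i r_j·B < r_i·B < B, then r_i r_j·B < r_j·B < B. -/

import Mathlib

/-!
Let `c i β = ⟪β, α i⟫`. If `α i ∉ B`, then `r i` moves exactly the `β ∈ B` with `c i β ≠ 0`, it
sends them to `β - c i β • α i`, and such an image never lies in `B`, since its inner product
with `β` is `1`. Hence `r i · B < B` holds iff `α i ∉ B` and among the moved elements one of
minimal height has `c i = 1` (`lt_rAct_iff`). For orthogonal nodes, `c i` is unchanged by `r j`,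
so `r i r j · B < r j · B` is the same condition with the heights replaced by `ht - c j`
(`lt_rAct_rAct_iff`).

If one of the two conclusions fails, there are `γ, β ∈ B` of different signs for one of `c i`,
`c j`, violating the minimality. Comparing heights leaves a few possibilities for the values of
`(c i, c j)` on the two roots. In the extreme ones, `β - γ` is `α i + α j` or `α i - α j`, so
admissibility, for `r i · B` or for `B`, yields `r i r j · B = B`, which is absurd because
`r i r j · B < r i · B < B`. In all others, a combination of `β`, `γ`, `α i`, `α j` is a root of
height `0`, which does not exist (`ht_ne_zero`).
-/

open scoped InnerProductSpace

/-- A finite crystallographic simply laced root system `Φ` in a real inner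
product space, normalized so that `⟪β, β⟫ = 2` for all roots, together with a
fixed base `α 1, …, α n` (the nodes of the diagram `M`), the corresponding set
`Pos` of positive roots, and the height linear functional `ht`. -/
structure SLRS (V : Type) [NormedAddCommGroup V] [InnerProductSpace ℝ V] where
  /-- the number of nodes of the diagram -/
  n : ℕ
  /-- the set of roots -/
  Φ : Set V
  /-- the set of positive roots -/
  Pos : Set V
  /-- the simple roots -/
  α : Fin n → V
  /-- the height functional: heights are sums of coefficients on simple roots -/
  ht : V →ₗ[ℝ] ℝ
  finite : Φ.Finite
  pos_subset : Pos ⊆ Φ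
  mem_pos_or_neg : ∀ β ∈ Φ, β ∈ Pos ∨ -β ∈ Pos
  not_pos_and_neg : ∀ β ∈ Pos, -β ∉ Pos
  alpha_pos : ∀ i, α i ∈ Pos
  norm_two : ∀ β ∈ Φ, ⟪β, β⟫_ℝ = 2
  inner_int : ∀ β ∈ Φ, ∀ γ ∈ Φ, ∃ z : ℤ, ⟪β, γ⟫_ℝ = (z : ℝ)
  reflect_mem : ∀ β ∈ Φ, ∀ γ ∈ Φ, β - ⟪β, γ⟫_ℝ • γ ∈ Φ
  reduced : ∀ β ∈ Φ, ∀ t : ℝ, t • β ∈ Φ → t = 1 ∨ t = -1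
  pos_coeff : ∀ β ∈ Pos, ∃ a : Fin n → ℕ, β = ∑ i, (a i : ℝ) • α i
  ht_alpha : ∀ i, ht (α i) = 1

namespace SLRS

variable {V : Type} [NormedAddCommGroup V] [InnerProductSpace ℝ V] (S : SLRS V)

/-- Adjacency of two nodes of the diagram: `i ∼ j` iff `⟪α i, α j⟫ = -1`. -/
def adj (i j : Fin S.n) : Prop := ⟪S.α i, S.α j⟫_ℝ = -1

/-- The reflection along a root `δ` (normalized so that `⟪δ, δ⟫ = 2`). -/
def reflRoot (δ : V) : V → V := fun v => v - ⟪v, δ⟫_ℝ • δ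

/-- The fundamental reflection `r i`. -/
def refl (i : Fin S.n) : V → V := reflRoot (S.α i)

/-- A set of mutually orthogonal positive roots. -/
def IsOrthoSet (B : Set V) : Prop :=
  B ⊆ S.Pos ∧ ∀ β ∈ B, ∀ γ ∈ B, β ≠ γ → ⟪β, γ⟫_ℝ = 0

/-- The action of a map `w` on a set `B` of positive roots:
`w·B = Φ⁺ ∩ {± w β : β ∈ B}`. -/
def mapSet (w : V → V) (B : Set V) : Set V :=
  {x ∈ S.Pos | ∃ β ∈ B, w β = x ∨ w β = -x}

/-- The action of the fundamental reflection `r i` on a set of positive roots. -/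
def rAct (i : Fin S.n) (B : Set V) : Set V := S.mapSet (S.refl i) B

/-- The action of the reflection along a root `δ` on a set of positive roots. -/
def reflAct (δ : V) (B : Set V) : Set V := S.mapSet (reflRoot δ) B

/-- The `W`-orbit of `B`, `W` being generated by the fundamental reflections. -/
def orbitOf (B : Set V) : Set (Set V) :=
  {C | Relation.ReflTransGen (fun X Y => ∃ i, Y = S.rAct i X) B C}

/-- `𝓑` is a `W`-orbit of sets of mutually orthogonal positive roots. -/
def IsOrbit (𝓑 : Set (Set V)) : Prop :=
  ∃ B, S.IsOrthoSet B ∧ 𝓑 = S.orbitOf B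

/-- Admissibility of a `W`-orbit of sets of mutually orthogonal positive roots. -/
def Admissible (𝓑 : Set (Set V)) : Prop :=
  S.IsOrbit 𝓑 ∧ ∀ B ∈ 𝓑, ∀ i j : Fin S.n, i ≠ j → ¬ S.adj i j →
    (∃ γ, γ ∈ B ∧ γ - S.α i + S.α j ∈ B) → S.rAct i B = S.rAct j B

/-- The height order: `B < C` iff `B ≠ C` and the minimal height of an element
of `B \ C` is smaller than the minimal height of an element of `C \ B`. -/
def lt (B C : Set V) : Prop :=
  B ≠ C ∧ sInf (⇑S.ht '' (B \ C)) < sInf (⇑S.ht '' (C \ B))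

/-- The map `V → V` determined by the word `l = [i₁, …, iₛ]`,
namely `r i₁ ∘ r i₂ ∘ ⋯ ∘ r iₛ`. -/
def wordMap (l : List (Fin S.n)) : V → V := l.foldr (fun i f => S.refl i ∘ f) id

/-- A map belongs to the Weyl group `W` iff it is realized by a word in the
fundamental reflections. -/
def InW (w : V → V) : Prop := ∃ l : List (Fin S.n), S.wordMap l = w

/-- The Coxeter length of an element of `W`: the minimal length of a word in
the fundamental reflections representing it. -/
noncomputable def len (w : V → V) : ℕ :=
  sInf {k | ∃ l : List (Fin S.n), l.length = k ∧ S.wordMap l = w}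

/-- The action of `w ∈ W` on a set of positive roots. -/
def wAct (w : V → V) (B : Set V) : Set V := S.mapSet w B

/-- `r i₁ · (r i₂ · ⋯ (r iₛ · B))` for the word `l = [i₁, …, iₛ]`. -/
def suffixAct (l : List (Fin S.n)) (B : Set V) : Set V := l.foldr S.rAct B

/-- The chain `B > r iₛ · B > r iₛ₋₁ r iₛ · B > ⋯ > r i₁ ⋯ r iₛ · B` obtained by
successively applying the letters of the word `l = [i₁, …, iₛ]` to `B` is
strictly descending at every step. -/
def DescChain (l : List (Fin S.n)) (B : Set V) : Prop :=
  ∀ k < l.length, S.lt (S.suffixAct (l.drop k) B) (S.suffixAct (l.drop (k + 1)) B)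

end SLRS

namespace SLRS

section Aux

variable {V : Type} [NormedAddCommGroup V] [InnerProductSpace ℝ V] (S : SLRS V)

/-! ### Roots, heights and inner products -/

lemma alpha_mem (i : Fin S.n) : S.α i ∈ S.Φ := S.pos_subset (S.alpha_pos i)

lemma neg_mem {β : V} (h : β ∈ S.Φ) : -β ∈ S.Φ := by
  have := S.reflect_mem β h β h
  rw [S.norm_two β h] at this
  have e : β - (2 : ℝ) • β = -β := by module
  rwa [e] at this

lemma ht_pos_nat {β : V} (h : β ∈ S.Pos) : ∃ k : ℕ, 1 ≤ k ∧ S.ht β = k := by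
  obtain ⟨a, ha⟩ := S.pos_coeff β h
  have hk : S.ht β = ((∑ i, a i : ℕ) : ℝ) := by
    rw [ha]; simp [S.ht_alpha]
  refine ⟨_, ?_, hk⟩
  by_contra hlt
  have h0 : ∀ i, a i = 0 := by simpa using hlt
  have hz : β = 0 := by rw [ha]; simp [h0]
  have := S.norm_two β (S.pos_subset h)
  simp [hz] at this

lemma ht_int {β : V} (h : β ∈ S.Φ) : ∃ k : ℤ, S.ht β = k := by
  rcases S.mem_pos_or_neg β h with h | h <;> obtain ⟨k, -, hk⟩ := S.ht_pos_nat h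
  · exact ⟨k, by simpa using hk⟩
  · refine ⟨-k, ?_⟩
    rw [map_neg] at hk
    push_cast
    linarith

lemma mem_pos_iff {β : V} (h : β ∈ S.Φ) : β ∈ S.Pos ↔ 0 < S.ht β := by
  constructor
  · intro hp
    obtain ⟨k, hk, e⟩ := S.ht_pos_nat hp
    rw [e]; exact_mod_cast hk
  · intro hp
    rcases S.mem_pos_or_neg β h with h | h
    · exact h
    · obtain ⟨k, -, e⟩ := S.ht_pos_nat h
      rw [map_neg] at e
      have : (0 : ℝ) ≤ k := k.cast_nonneg
      linarith

lemma ht_ne_zero {β : V} (h : β ∈ S.Φ) : S.ht β ≠ 0 := by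
  rcases S.mem_pos_or_neg β h with h | h <;> obtain ⟨k, hk, e⟩ := S.ht_pos_nat h
  · rw [e]; positivity
  · rw [map_neg] at e
    have : (1 : ℝ) ≤ k := by exact_mod_cast hk
    linarith

lemma eq_of_inner_two {β γ : V} (hβ : β ∈ S.Φ) (hγ : γ ∈ S.Φ) (h : ⟪β, γ⟫_ℝ = 2) : β = γ := by
  have : ⟪β - γ, β - γ⟫_ℝ = 0 := by
    rw [real_inner_sub_sub_self, S.norm_two β hβ, S.norm_two γ hγ, h]; norm_num
  exact sub_eq_zero.1 (inner_self_eq_zero.1 this)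

lemma inner_cases {β γ : V} (hβ : β ∈ S.Φ) (hγ : γ ∈ S.Φ) (h1 : β ≠ γ) (h2 : β ≠ -γ) :
    ⟪β, γ⟫_ℝ = -1 ∨ ⟪β, γ⟫_ℝ = 0 ∨ ⟪β, γ⟫_ℝ = 1 := by
  obtain ⟨z, hz⟩ := S.inner_int β hβ γ hγ
  have hs := real_inner_mul_inner_self_le β γ
  rw [S.norm_two β hβ, S.norm_two γ hγ, hz] at hs
  have hs' : z * z ≤ 4 := by
    have : ((z * z : ℤ) : ℝ) ≤ (4 : ℤ) := by push_cast; linarith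
    exact_mod_cast this
  have hu : z ≤ 2 := by nlinarith
  have hl : -2 ≤ z := by nlinarith
  have n2 : z ≠ 2 := by
    rintro rfl
    exact h1 (S.eq_of_inner_two hβ hγ (by simpa using hz))
  have n2' : z ≠ -2 := by
    rintro rfl
    refine h2 (S.eq_of_inner_two hβ (S.neg_mem hγ) ?_)
    rw [inner_neg_right, hz]; norm_num
  have : z = -1 ∨ z = 0 ∨ z = 1 := by omega
  rcases this with rfl | rfl | rfl <;> simp [hz]

lemma sub_mem {β γ : V} (hβ : β ∈ S.Φ) (hγ : γ ∈ S.Φ) (h : ⟪β, γ⟫_ℝ = 1) : β - γ ∈ S.Φ := by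
  simpa [h] using S.reflect_mem β hβ γ hγ

lemma add_mem {β γ : V} (hβ : β ∈ S.Φ) (hγ : γ ∈ S.Φ) (h : ⟪β, γ⟫_ℝ = -1) : β + γ ∈ S.Φ := by
  simpa [h] using S.reflect_mem β hβ γ hγ

lemma inner_pos_cases {β : V} (hβ : β ∈ S.Pos) (i : Fin S.n) (h : β ≠ S.α i) :
    ⟪β, S.α i⟫_ℝ = -1 ∨ ⟪β, S.α i⟫_ℝ = 0 ∨ ⟪β, S.α i⟫_ℝ = 1 :=
  S.inner_cases (S.pos_subset hβ) (S.alpha_mem i) h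
    (fun e => S.not_pos_and_neg _ (S.alpha_pos i) (e ▸ hβ))

/-- Distinct simple roots that are not adjacent are orthogonal: otherwise their difference
would be a root of height `0`. -/
lemma inner_alpha {i j : Fin S.n} (h : S.α i ≠ S.α j) (hn : ¬ S.adj i j) :
    ⟪S.α i, S.α j⟫_ℝ = 0 := by
  rcases S.inner_pos_cases (S.alpha_pos i) j h with h | h | h
  · exact absurd h hn
  · exact h
  · refine absurd ?_ (S.ht_ne_zero (S.sub_mem (S.alpha_mem i) (S.alpha_mem j) h))
    simp [S.ht_alpha]

/-! ### Fundamental reflections -/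

lemma refl_apply (i : Fin S.n) (v : V) : S.refl i v = v - ⟪v, S.α i⟫_ℝ • S.α i := rfl

lemma ht_refl (i : Fin S.n) (v : V) : S.ht (S.refl i v) = S.ht v - ⟪v, S.α i⟫_ℝ := by
  simp [refl_apply, S.ht_alpha]

lemma refl_mem (i : Fin S.n) {v : V} (h : v ∈ S.Φ) : S.refl i v ∈ S.Φ :=
  S.reflect_mem v h _ (S.alpha_mem i)

lemma refl_neg (i : Fin S.n) (v : V) : S.refl i (-v) = -S.refl i v := by
  simp only [refl_apply, inner_neg_left]; module

lemma inner_refl_refl (i : Fin S.n) (v w : V) : ⟪S.refl i v, S.refl i w⟫_ℝ = ⟪v, w⟫_ℝ := by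
  simp only [refl_apply, inner_sub_left, inner_sub_right, real_inner_smul_left,
    real_inner_smul_right, S.norm_two _ (S.alpha_mem i), real_inner_comm w (S.α i)]
  ring

lemma refl_refl (i : Fin S.n) (v : V) : S.refl i (S.refl i v) = v := by
  simp only [refl_apply, inner_sub_left, real_inner_smul_left, S.norm_two _ (S.alpha_mem i)]
  module

lemma inner_refl_of_orth {i j : Fin S.n} (h : ⟪S.α i, S.α j⟫_ℝ = 0) (v : V) :
    ⟪S.refl i v, S.α j⟫_ℝ = ⟪v, S.α j⟫_ℝ := by
  simp [refl_apply, inner_sub_left, real_inner_smul_left, h]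

lemma refl_comm {i j : Fin S.n} (h : ⟪S.α i, S.α j⟫_ℝ = 0) (v : V) :
    S.refl i (S.refl j v) = S.refl j (S.refl i v) := by
  have h' : ⟪S.α j, S.α i⟫_ℝ = 0 := by rw [real_inner_comm]; exact h
  rw [S.refl_apply i, S.inner_refl_of_orth h', S.refl_apply j (S.refl i v),
    S.inner_refl_of_orth h, S.refl_apply i, S.refl_apply j]
  module

/-- A fundamental reflection permutes the positive roots other than its own simple root. -/
lemma refl_pos (i : Fin S.n) {β : V} (hβ : β ∈ S.Pos) (h : β ≠ S.α i) : S.refl i β ∈ S.Pos := by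
  have hΦ := S.refl_mem i (S.pos_subset hβ)
  rw [S.mem_pos_iff hΦ]
  have hne := S.ht_ne_zero hΦ
  rw [S.ht_refl] at hne ⊢
  obtain ⟨k, hk, e⟩ := S.ht_pos_nat hβ
  have hk' : (1 : ℝ) ≤ k := by exact_mod_cast hk
  have hle : 0 ≤ S.ht β - ⟪β, S.α i⟫_ℝ := by
    rcases S.inner_pos_cases hβ i h with h | h | h <;> rw [h, e] <;> linarith
  exact lt_of_le_of_ne hle hne.symm

/-! ### The action on sets of orthogonal positive roots -/

lemma rAct_rAct (i j : Fin S.n) {B : Set V} (hB : B ⊆ S.Pos) :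
    S.rAct i (S.rAct j B) = S.mapSet (fun v => S.refl i (S.refl j v)) B := by
  ext x
  constructor
  · rintro ⟨hx, y, ⟨-, β, hβ, h⟩, h'⟩
    refine ⟨hx, β, hβ, ?_⟩
    rcases h with h | h <;> rcases h' with h' | h' <;> simp [h, h', refl_neg]
  · rintro ⟨hx, β, hβ, h⟩
    refine ⟨hx, ?_⟩
    rcases S.mem_pos_or_neg _ (S.refl_mem j (S.pos_subset (hB hβ))) with hp | hp
    · exact ⟨_, ⟨hp, β, hβ, Or.inl rfl⟩, h⟩
    · refine ⟨_, ⟨hp, β, hβ, Or.inr (neg_neg _).symm⟩, ?_⟩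
      rw [refl_neg]
      rcases h with h | h <;> simp only at h <;> simp [h]

lemma rAct_self (i : Fin S.n) {B : Set V} (hB : B ⊆ S.Pos) : S.rAct i (S.rAct i B) = B := by
  rw [S.rAct_rAct i i hB]
  ext x
  simp only [mapSet, refl_refl, Set.mem_ofPred_eq]
  constructor
  · rintro ⟨hx, β, hβ, rfl | rfl⟩
    · exact hβ
    · exact absurd (hB hβ) (S.not_pos_and_neg _ hx)
  · exact fun hx => ⟨hB hx, x, hx, Or.inl rfl⟩

lemma rAct_comm {i j : Fin S.n} (h : ⟪S.α i, S.α j⟫_ℝ = 0) {B : Set V} (hB : B ⊆ S.Pos) :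
    S.rAct i (S.rAct j B) = S.rAct j (S.rAct i B) := by
  rw [S.rAct_rAct i j hB, S.rAct_rAct j i hB]
  congr 1
  funext v
  exact S.refl_comm h v

lemma isOrthoSet_rAct (i : Fin S.n) {B : Set V} (hB : S.IsOrthoSet B) :
    S.IsOrthoSet (S.rAct i B) := by
  refine ⟨fun x hx => hx.1, ?_⟩
  rintro x ⟨hx, β, hβ, h⟩ y ⟨hy, γ, hγ, h'⟩ hxy
  by_cases hβγ : β = γ
  · subst hβγ
    exfalso
    rcases h with h | h <;> rcases h' with h' | h' <;> rw [h] at h'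
    · exact hxy h'
    · exact S.not_pos_and_neg y hy (h' ▸ hx)
    · exact S.not_pos_and_neg x hx (h' ▸ hy)
    · exact hxy (neg_injective h')
  · have h0 := hB.2 β hβ γ hγ hβγ
    rw [← S.inner_refl_refl i] at h0
    rcases h with h | h <;> rcases h' with h' | h' <;> simpa [h, h'] using h0

lemma isOrthoSet_of_mem {𝓑 : Set (Set V)} (h : S.IsOrbit 𝓑) {B : Set V} (hB : B ∈ 𝓑) :
    S.IsOrthoSet B := by
  obtain ⟨B₀, h0, rfl⟩ := h
  induction hB with
  | refl => exact h0
  | tail _ hs ih => obtain ⟨i, rfl⟩ := hs; exact S.isOrthoSet_rAct i ih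

lemma rAct_mem {𝓑 : Set (Set V)} (h : S.IsOrbit 𝓑) {B : Set V} (hB : B ∈ 𝓑) (i : Fin S.n) :
    S.rAct i B ∈ 𝓑 := by
  obtain ⟨B₀, h0, rfl⟩ := h
  exact Relation.ReflTransGen.tail hB ⟨i, rfl⟩

lemma mem_rAct_iff {i : Fin S.n} {B : Set V} (hB : B ⊆ S.Pos) (hi : S.α i ∉ B) {x : V} :
    x ∈ S.rAct i B ↔ ∃ β ∈ B, S.refl i β = x := by
  have hp : ∀ β ∈ B, S.refl i β ∈ S.Pos := fun β hβ =>
    S.refl_pos i (hB hβ) (fun e => hi (e ▸ hβ))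
  constructor
  · rintro ⟨hx, β, hβ, h | h⟩
    · exact ⟨β, hβ, h⟩
    · exact absurd (h ▸ hp β hβ) (S.not_pos_and_neg x hx)
  · rintro ⟨β, hβ, rfl⟩
    exact ⟨hp β hβ, β, hβ, Or.inl rfl⟩

lemma rAct_eq_of_mem {i : Fin S.n} {B : Set V} (hB : S.IsOrthoSet B) (hi : S.α i ∈ B) :
    S.rAct i B = B := by
  have fix : ∀ β ∈ B, β ≠ S.α i → S.refl i β = β := fun β hβ hne => by
    rw [refl_apply, hB.2 β hβ _ hi hne]; simp
  have hself : S.refl i (S.α i) = -S.α i := by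
    rw [refl_apply, S.norm_two _ (S.alpha_mem i)]; module
  ext x
  constructor
  · rintro ⟨hx, β, hβ, h⟩
    by_cases e : β = S.α i
    · subst e
      rw [hself] at h
      rcases h with h | h
      · exact absurd (h ▸ hx) (S.not_pos_and_neg _ (S.alpha_pos i))
      · exact neg_injective h ▸ hβ
    · rw [fix β hβ e] at h
      rcases h with h | h
      · exact h ▸ hβ
      · exact absurd (h ▸ hB.1 hβ) (S.not_pos_and_neg x hx)
  · intro hx
    refine ⟨hB.1 hx, x, hx, ?_⟩
    by_cases e : x = S.α i
    · rw [e]; exact Or.inr hself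
    · exact Or.inl (fix x hx e)

/-- The image under `r i` of an element `β` of an orthogonal set `B` stays in `B` only if `r i` fixes `β`:
otherwise its inner product with `β` would be `1`. -/
lemma mem_rAct_inner {i : Fin S.n} {B : Set V} (hB : S.IsOrthoSet B) (hi : S.α i ∉ B) {β : V}
    (hβ : β ∈ B) : S.refl i β ∈ B ↔ ⟪β, S.α i⟫_ℝ = 0 := by
  constructor
  · intro h
    by_contra hc
    have hin : ⟪S.refl i β, β⟫_ℝ = 1 := by
      rw [refl_apply, inner_sub_left, real_inner_smul_left, S.norm_two _ (S.pos_subset (hB.1 hβ)),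
        real_inner_comm β]
      rcases S.inner_pos_cases (hB.1 hβ) i (fun e => hi (e ▸ hβ)) with h | h | h
      · rw [h]; norm_num
      · exact absurd h hc
      · rw [h]; norm_num
    by_cases e : S.refl i β = β
    · rw [e, S.norm_two _ (S.pos_subset (hB.1 hβ))] at hin
      norm_num at hin
    · rw [hB.2 _ h _ hβ e] at hin
      norm_num at hin
  · intro h
    rw [refl_apply, h]; simpa using hβ

lemma rAct_diff {i : Fin S.n} {B : Set V} (hB : S.IsOrthoSet B) (hi : S.α i ∉ B) :
    S.rAct i B \ B = S.refl i '' {β ∈ B | ⟪β, S.α i⟫_ℝ ≠ 0} := by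
  ext x
  rw [Set.mem_sdiff, S.mem_rAct_iff hB.1 hi]
  constructor
  · rintro ⟨⟨β, hβ, rfl⟩, h⟩
    exact ⟨β, ⟨hβ, fun h0 => h ((S.mem_rAct_inner hB hi hβ).2 h0)⟩, rfl⟩
  · rintro ⟨β, ⟨hβ, h⟩, rfl⟩
    exact ⟨⟨β, hβ, rfl⟩, fun h0 => h ((S.mem_rAct_inner hB hi hβ).1 h0)⟩

lemma diff_rAct {i : Fin S.n} {B : Set V} (hB : S.IsOrthoSet B) (hi : S.α i ∉ B) :
    B \ S.rAct i B = {β ∈ B | ⟪β, S.α i⟫_ℝ ≠ 0} := by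
  ext x
  rw [Set.mem_sdiff, S.mem_rAct_iff hB.1 hi, Set.mem_ofPred_eq]
  refine and_congr_right fun hx => not_congr ?_
  rw [← S.mem_rAct_inner hB hi hx]
  constructor
  · rintro ⟨β, hβ, rfl⟩
    rwa [refl_refl]
  · exact fun h => ⟨_, h, S.refl_refl i x⟩

/-! ### The height order on an orbit -/

/-- `r i · B < B` iff `α i ∉ B` and, among the elements of `B` moved by `r i`, some element of
minimal height is lowered. -/
lemma lt_rAct_iff (i : Fin S.n) {B : Set V} (hB : S.IsOrthoSet B) :
    S.lt (S.rAct i B) B ↔ S.α i ∉ B ∧ ∃ β ∈ B, ⟪β, S.α i⟫_ℝ = 1 ∧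
      ∀ γ ∈ B, ⟪γ, S.α i⟫_ℝ ≠ 0 → S.ht β ≤ S.ht γ := by
  by_cases hi : S.α i ∈ B
  · simp [lt, S.rAct_eq_of_mem hB hi, hi]
  simp only [hi, not_false_eq_true, true_and]
  rw [lt, S.rAct_diff hB hi, S.diff_rAct hB hi]
  set M := {β ∈ B | ⟪β, S.α i⟫_ℝ ≠ 0} with hM
  have hfin : M.Finite := S.finite.subset fun x hx => S.pos_subset (hB.1 hx.1)
  constructor
  · rintro ⟨hne, hlt⟩
    have hMne : M.Nonempty := by
      by_contra he
      rw [Set.not_nonempty_iff_eq_empty] at he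
      simp [he] at hlt
    obtain ⟨β, hβM, hβ⟩ := ((hMne.image _).image S.ht).csInf_mem ((hfin.image _).image _)
    obtain ⟨β, hβM, rfl⟩ := hβM
    refine ⟨β, hβM.1, ?_⟩
    have hall : ∀ γ ∈ M, S.ht β - ⟪β, S.α i⟫_ℝ < S.ht γ := fun γ hγ => by
      rw [← S.ht_refl, hβ]
      exact hlt.trans_le (csInf_le (hfin.image _).bddBelow ⟨γ, hγ, rfl⟩)
    have h1 : ⟪β, S.α i⟫_ℝ = 1 := by
      have := hall β hβM
      rcases S.inner_pos_cases (hB.1 hβM.1) i (fun e => hi (e ▸ hβM.1)) with h | h | h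
      · rw [h] at this; linarith
      · exact absurd h hβM.2
      · exact h
    refine ⟨h1, fun γ hγ hγ0 => ?_⟩
    have := hall γ ⟨hγ, hγ0⟩
    obtain ⟨k, hk⟩ := S.ht_int (S.pos_subset (hB.1 hβM.1))
    obtain ⟨l, hl⟩ := S.ht_int (S.pos_subset (hB.1 hγ))
    rw [h1, hk, hl] at this
    rw [hk, hl]
    have : k - 1 < l := by exact_mod_cast this
    exact_mod_cast (show k ≤ l by omega)
  · rintro ⟨β, hβ, h1, hmin⟩
    have hβM : β ∈ M := ⟨hβ, by rw [h1]; norm_num⟩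
    constructor
    · intro e
      have := S.diff_rAct hB hi
      rw [e, Set.sdiff_self, ← hM] at this
      rw [← this] at hβM
      exact hβM
    · have hl : sInf (S.ht '' (S.refl i '' M)) ≤ S.ht (S.refl i β) :=
        csInf_le ((hfin.image _).image _).bddBelow ⟨_, ⟨β, hβM, rfl⟩, rfl⟩
      have hr : S.ht β ≤ sInf (S.ht '' M) := by
        refine le_csInf ⟨_, β, hβM, rfl⟩ ?_
        rintro _ ⟨γ, hγ, rfl⟩
        exact hmin γ hγ.1 hγ.2
      rw [S.ht_refl, h1] at hl
      linarith

/-- The criterion `lt_rAct_iff` for `r j · B` in place of `B`, for orthogonal nodes, expressed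
through the elements of `B`. -/
lemma lt_rAct_rAct_iff {i j : Fin S.n} (h : ⟪S.α i, S.α j⟫_ℝ = 0) {B : Set V}
    (hB : S.IsOrthoSet B) (hj : S.α j ∉ B) :
    S.lt (S.rAct i (S.rAct j B)) (S.rAct j B) ↔ S.α i ∉ B ∧ ∃ β ∈ B, ⟪β, S.α i⟫_ℝ = 1 ∧
      ∀ γ ∈ B, ⟪γ, S.α i⟫_ℝ ≠ 0 → S.ht β - ⟪β, S.α j⟫_ℝ ≤ S.ht γ - ⟪γ, S.α j⟫_ℝ := by
  have h' : ⟪S.α j, S.α i⟫_ℝ = 0 := by rw [real_inner_comm]; exact h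
  rw [S.lt_rAct_iff i (S.isOrthoSet_rAct j hB)]
  have hfix : S.refl j (S.α i) = S.α i := by simp [refl_apply, h]
  have hmem : S.α i ∈ S.rAct j B ↔ S.α i ∈ B := by
    rw [S.mem_rAct_iff hB.1 hj]
    constructor
    · rintro ⟨β, hβ, e⟩
      have : β = S.α i := by rw [← S.refl_refl j β, e, hfix]
      exact this ▸ hβ
    · exact fun hi => ⟨_, hi, hfix⟩
  rw [hmem]
  simp only [S.mem_rAct_iff hB.1 hj]
  simp only [exists_exists_and_eq_and, forall_exists_index, and_imp,
    forall_apply_eq_imp_iff₂, S.inner_refl_of_orth h', S.ht_refl]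

lemma lt_asymm {B C : Set V} (h : S.lt B C) : ¬ S.lt C B := fun hCB =>
  _root_.lt_asymm h.2 hCB.2

/-- Integrality of heights: a strict inequality improves by `1`. -/
lemma ht_add_one_le {β γ : V} (hβ : β ∈ S.Φ) (hγ : γ ∈ S.Φ) (h : S.ht β < S.ht γ) :
    S.ht β + 1 ≤ S.ht γ := by
  obtain ⟨k, hk⟩ := S.ht_int hβ
  obtain ⟨l, hl⟩ := S.ht_int hγ
  rw [hk, hl] at h ⊢
  exact_mod_cast h

end Aux

end SLRS

open SLRS

variable {V : Type} [NormedAddCommGroup V] [InnerProductSpace ℝ V]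

/-- Lemma 3.4(i): for `𝓑` admissible, `B ∈ 𝓑`, nodes `i ≠ j`
with `i ≁ j`: if `r i r j · B < r i · B < B`, then `r i r j · B < r j · B < B`. -/
theorem chain_nonadjacent_down (S : SLRS V) (𝓑 : Set (Set V))
    (hadm : S.Admissible 𝓑) (B : Set V) (hB : B ∈ 𝓑) (i j : Fin S.n)
    (hne : i ≠ j) (hnadj : ¬ S.adj i j)
    (h1 : S.lt (S.rAct i (S.rAct j B)) (S.rAct i B))
    (h2 : S.lt (S.rAct i B) B) :
    S.lt (S.rAct i (S.rAct j B)) (S.rAct j B) ∧ S.lt (S.rAct j B) B := by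
  have hO : S.IsOrthoSet B := S.isOrthoSet_of_mem hadm.1 hB
  have hΦ : ∀ β ∈ B, β ∈ S.Φ := fun β hβ => S.pos_subset (hO.1 hβ)
  have hback : S.rAct i (S.rAct j B) ≠ B := fun e => S.lt_asymm h2 (by rwa [e] at h1)
  by_cases hα : S.α i = S.α j
  · have e : S.rAct j B = S.rAct i B := by simp only [rAct, SLRS.refl, hα]
    exact absurd (e ▸ S.rAct_self i hO.1) hback
  have hij : ⟪S.α i, S.α j⟫_ℝ = 0 := S.inner_alpha hα hnadj
  have hji : ⟪S.α j, S.α i⟫_ℝ = 0 := by rw [real_inner_comm]; exact hij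
  obtain ⟨hi, β, hβ, hβi, hβmin⟩ := (S.lt_rAct_iff i hO).1 h2
  have h1' := h1
  rw [S.rAct_comm hij hO.1, S.lt_rAct_rAct_iff hji hO hi] at h1'
  obtain ⟨hj, β', hβ', hβ'j, hβ'min⟩ := h1'
  have hci : ∀ γ ∈ B, ⟪γ, S.α i⟫_ℝ = -1 ∨ ⟪γ, S.α i⟫_ℝ = 0 ∨ ⟪γ, S.α i⟫_ℝ = 1 := fun γ hγ =>
    S.inner_pos_cases (hO.1 hγ) i (fun e => hi (e ▸ hγ))
  have hcj : ∀ γ ∈ B, ⟪γ, S.α j⟫_ℝ = -1 ∨ ⟪γ, S.α j⟫_ℝ = 0 ∨ ⟪γ, S.α j⟫_ℝ = 1 := fun γ hγ =>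
    S.inner_pos_cases (hO.1 hγ) j (fun e => hj (e ▸ hγ))
  have hfin : B.Finite := S.finite.subset hΦ
  constructor
  · rw [S.lt_rAct_rAct_iff hij hO hj]
    refine ⟨hi, ?_⟩
    obtain ⟨δ, ⟨hδ, hδi⟩, hδmin⟩ := Set.exists_min_image {γ ∈ B | ⟪γ, S.α i⟫_ℝ ≠ 0}
      (fun γ => S.ht γ - ⟪γ, S.α j⟫_ℝ) (hfin.subset fun x hx => hx.1)
      ⟨β, hβ, by rw [hβi]; norm_num⟩
    by_cases hδ1 : ⟪δ, S.α i⟫_ℝ = 1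
    · exact ⟨δ, hδ, hδ1, fun γ hγ h => hδmin γ ⟨hγ, h⟩⟩
    by_cases hle : S.ht β - ⟪β, S.α j⟫_ℝ ≤ S.ht δ - ⟪δ, S.α j⟫_ℝ
    · exact ⟨β, hβ, hβi, fun γ hγ h => hle.trans (hδmin γ ⟨hγ, h⟩)⟩
    exfalso
    push Not at hle
    have hδi' : ⟪δ, S.α i⟫_ℝ = -1 := by
      rcases hci δ hδ with h | h | h
      · exact h
      · exact absurd h hδi
      · exact absurd h hδ1
    have hβδ := hβmin δ hδ hδi
    have horth : ⟪δ, β⟫_ℝ = 0 := hO.2 δ hδ β hβ (fun e => by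
      rw [e, hβi] at hδi'; norm_num at hδi')
    have hδα : δ + S.α i ∈ S.Φ := S.add_mem (hΦ δ hδ) (S.alpha_mem i) hδi'
    have hin : ⟪δ + S.α i, β⟫_ℝ = 1 := by
      rw [inner_add_left, horth, real_inner_comm, hβi]; norm_num
    have hε : δ + S.α i - β ∈ S.Φ := S.sub_mem hδα (hΦ β hβ) hin
    -- If `ht δ = ht β` and `c j δ - c j β = 1`, then `δ + α i - β` has height `1` and inner
    -- product `1` with `α j`, so subtracting `α j` gives a root of height `0`.
    have key : ⟪δ, S.α j⟫_ℝ - ⟪β, S.α j⟫_ℝ = 1 → False := fun hd => by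
      have hht : S.ht δ = S.ht β := by
        by_contra hne'
        have := S.ht_add_one_le (hΦ β hβ) (hΦ δ hδ) (lt_of_le_of_ne hβδ (Ne.symm hne'))
        linarith
      have h1 : ⟪δ + S.α i - β, S.α j⟫_ℝ = 1 := by
        rw [inner_sub_left, inner_add_left, hij]; linarith
      refine S.ht_ne_zero (S.sub_mem hε (S.alpha_mem j) h1) ?_
      simp [S.ht_alpha, hht]
    rcases hcj δ hδ with hd | hd | hd <;> rcases hcj β hβ with hb | hb | hb
    · linarith
    · linarith
    · linarith
    · exact key (by linarith)
    · linarith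
    · linarith
    · have h1 : ⟪δ + S.α i, β + S.α j⟫_ℝ = 2 := by
        rw [inner_add_right, hin, inner_add_left, hd, hij]; norm_num
      have h2' := (S.eq_of_inner_two hδα (S.add_mem (hΦ β hβ) (S.alpha_mem j) hb) h1).symm
      have he : β - S.α i + S.α j = δ := by
        rw [eq_sub_of_add_eq h2']; abel
      have := hadm.2 B hB i j hne hnadj ⟨β, hβ, he ▸ hδ⟩
      exact hback (this ▸ S.rAct_self i hO.1)
    · exact key (by linarith)
    · linarith
  · rw [S.lt_rAct_iff j hO]
    refine ⟨hj, ?_⟩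
    obtain ⟨γ, ⟨hγ, hγj⟩, hγmin⟩ := Set.exists_min_image {γ ∈ B | ⟪γ, S.α j⟫_ℝ ≠ 0}
      S.ht (hfin.subset fun x hx => hx.1) ⟨β', hβ', by rw [hβ'j]; norm_num⟩
    by_cases hγ1 : ⟪γ, S.α j⟫_ℝ = 1
    · exact ⟨γ, hγ, hγ1, fun x hx h => hγmin x ⟨hx, h⟩⟩
    by_cases hle : S.ht β' ≤ S.ht γ
    · exact ⟨β', hβ', hβ'j, fun x hx h => hle.trans (hγmin x ⟨hx, h⟩)⟩
    exfalso
    push Not at hle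
    have hγj' : ⟪γ, S.α j⟫_ℝ = -1 := by
      rcases hcj γ hγ with h | h | h
      · exact h
      · exact absurd h hγj
      · exact absurd h hγ1
    have hge := S.ht_add_one_le (hΦ γ hγ) (hΦ β' hβ') hle
    have hmin' := hβ'min γ hγ hγj
    have horth : ⟪γ, β'⟫_ℝ = 0 := hO.2 γ hγ β' hβ' (fun e => by
      rw [e, hβ'j] at hγj'; norm_num at hγj')
    have hγα : γ + S.α j ∈ S.Φ := S.add_mem (hΦ γ hγ) (S.alpha_mem j) hγj'
    have hin : ⟪γ + S.α j, β'⟫_ℝ = 1 := by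
      rw [inner_add_left, horth, real_inner_comm, hβ'j]; norm_num
    have hε : γ + S.α j - β' ∈ S.Φ := S.sub_mem hγα (hΦ β' hβ') hin
    have key : ⟪β', S.α i⟫_ℝ - ⟪γ, S.α i⟫_ℝ = 1 → False := fun hd => by
      refine S.ht_ne_zero hε ?_
      have : S.ht β' = S.ht γ + 1 := by linarith
      simp [S.ht_alpha, this]
    rcases hci β' hβ' with hd | hd | hd <;> rcases hci γ hγ with hb | hb | hb
    · linarith
    · linarith
    · linarith
    · exact key (by linarith)
    · linarith
    · linarith
    · have hinner_two : ⟪γ + S.α j + S.α i, β'⟫_ℝ = 2 := by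
        rw [inner_add_left, hin, real_inner_comm, hd]; norm_num
      have hγji : γ + S.α j + S.α i ∈ S.Φ := S.add_mem hγα (S.alpha_mem i) (by
        rw [inner_add_left, hb, hji]; norm_num)
      have he := S.eq_of_inner_two hγji (hΦ β' hβ') hinner_two
      -- In `r i · B` the roots `γ` and `β' = γ + α i + α j` become `γ + α i` and `γ + α j`.
      have hm1 : γ + S.α i ∈ S.rAct i B :=
        (S.mem_rAct_iff hO.1 hi).2 ⟨γ, hγ, by rw [SLRS.refl_apply, hb]; module⟩
      have hm2 : γ + S.α i - S.α i + S.α j ∈ S.rAct i B :=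
        (S.mem_rAct_iff hO.1 hi).2 ⟨β', hβ', by rw [SLRS.refl_apply, hd, ← he]; module⟩
      have := hadm.2 _ (S.rAct_mem hadm.1 hB i) i j hne hnadj ⟨_, hm1, hm2⟩
      rw [S.rAct_self i hO.1] at this
      exact hback (by rw [S.rAct_comm hij hO.1, ← this])
    · exact key (by linarith)
    · linarith
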